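/- For all b, b' ∈ SB_3, if η(b) = η(b') then β_s(b) = β_s(b'), where η is the Birman homomorphism and β_s is the singular Burau representation. -/

import Mathlib

/-!
Write `B = β(σᵢ)` for the Burau matrices. They satisfy `(B - 1)(B + t) = 0`, so
`B⁻¹ = 1 + t⁻¹ (B - 1)`, while `β_s(τᵢ) = 1 + y (B - 1)`. In the representation of the braid group
twisted by the character `σᵢ ↦ c`, the element `σᵢ - σᵢ⁻¹` therefore acts as
`c B - c⁻¹ B⁻¹ = (c - c⁻¹) (1 + y (B - 1))`, provided `c² (y - 1) = y - t⁻¹`.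
Such a `c` exists in an algebraic closure of the fraction field of `ℤ[t, t⁻¹][y]`. Hence, with `ρ` the
linear extension of the twisted Burau representation and `χ` that of the character `σᵢ ↦ c`,
one has `ρ (η b) = χ (η b) • β_s b` for every singular braid `b` (`twisted_birman`). The scalar
`χ (η b)` is a product of factors `c`, `c⁻¹`, `c - c⁻¹`, so it is nonzero, and it depends only on
`η b`; so `η b` determines `β_s b`.
-/

/-- Generators of the singular braid monoid on 3 strands. -/
inductive SB3Gen : Type
  | s1 | s2 | sb1 | sb2 | t1 | t2

open FreeMonoid in
/-- Defining relations of the singular braid monoid on 3 strands. -/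
inductive SB3Rel : FreeMonoid SB3Gen → FreeMonoid SB3Gen → Prop
  | inv_s1 : SB3Rel (of .s1 * of .sb1) 1
  | inv_s1' : SB3Rel (of .sb1 * of .s1) 1
  | inv_s2 : SB3Rel (of .s2 * of .sb2) 1
  | inv_s2' : SB3Rel (of .sb2 * of .s2) 1
  | braid : SB3Rel (of .s1 * of .s2 * of .s1) (of .s2 * of .s1 * of .s2)
  | tau_s : SB3Rel (of .t2 * of .s1 * of .s2) (of .s1 * of .s2 * of .t1)
  | s_tau : SB3Rel (of .s2 * of .s1 * of .t2) (of .t1 * of .s2 * of .s1)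
  | comm1 : SB3Rel (of .s1 * of .t1) (of .t1 * of .s1)
  | comm2 : SB3Rel (of .s2 * of .t2) (of .t2 * of .s2)

/-- The singular braid monoid on 3 strands. -/
abbrev SB3 : Type := PresentedMonoid SB3Rel

/-- The generators of `SB3` as elements. -/
abbrev SB3.g (x : SB3Gen) : SB3 := PresentedMonoid.of SB3Rel x

noncomputable section

open LaurentPolynomial Polynomial

/-- `R = ℤ[t,t⁻¹][y]`. -/
abbrev RR : Type := Polynomial (LaurentPolynomial ℤ)

/-- The element `t` of `R`. -/
abbrev Rt : RR := Polynomial.C (LaurentPolynomial.T 1)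
/-- The element `t⁻¹` of `R`. -/
abbrev Rtinv : RR := Polynomial.C (LaurentPolynomial.T (-1))
/-- The element `y` of `R`. -/
abbrev Ry : RR := Polynomial.X

/-- The defining property of the singular Burau representation. -/
def IsSingularBurau (φ : SB3 →* Matrix (Fin 2) (Fin 2) RR) : Prop :=
  φ (SB3.g .s1) = !![-Rt, 1; 0, 1] ∧
  φ (SB3.g .s2) = !![1, 0; Rt, -Rt] ∧
  φ (SB3.g .t1) = !![1 - Ry - Rt * Ry, Ry; 0, 1] ∧
  φ (SB3.g .sb1) = !![-Rtinv, Rtinv; 0, 1] ∧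
  φ (SB3.g .sb2) = !![1, 0; 1, -Rtinv] ∧
  φ (SB3.g .t2) =
    !![-Rt, 1; 0, 1] * !![1, 0; Rt, -Rt] * !![1 - Ry - Rt * Ry, Ry; 0, 1] *
      !![1, 0; 1, -Rtinv] * !![-Rtinv, Rtinv; 0, 1]

end
/-- The defining relator of the braid group on 3 strands. -/
def braidRels3 : Set (FreeGroup (Fin 2)) :=
  {FreeGroup.of 0 * FreeGroup.of 1 * FreeGroup.of 0 *
    (FreeGroup.of 1 * FreeGroup.of 0 * FreeGroup.of 1)⁻¹}

/-- The braid group on 3 strands. -/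
abbrev B3 : Type := PresentedGroup braidRels3

/-- The generator `σ₁` of `B3`. -/
abbrev B3.sig1 : B3 := PresentedGroup.of 0
/-- The generator `σ₂` of `B3`. -/
abbrev B3.sig2 : B3 := PresentedGroup.of 1

/-- The defining property of the Birman homomorphism `η : SB3 → ℤB3`. -/
def IsBirman (η : SB3 →* MonoidAlgebra ℤ B3) : Prop :=
  η (SB3.g .s1) = MonoidAlgebra.of ℤ B3 B3.sig1 ∧
  η (SB3.g .s2) = MonoidAlgebra.of ℤ B3 B3.sig2 ∧
  η (SB3.g .sb1) = MonoidAlgebra.of ℤ B3 B3.sig1⁻¹ ∧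
  η (SB3.g .sb2) = MonoidAlgebra.of ℤ B3 B3.sig2⁻¹ ∧
  η (SB3.g .t1) = MonoidAlgebra.of ℤ B3 B3.sig1 - MonoidAlgebra.of ℤ B3 B3.sig1⁻¹ ∧
  η (SB3.g .t2) = MonoidAlgebra.of ℤ B3 B3.sig2 - MonoidAlgebra.of ℤ B3 B3.sig2⁻¹

/-- Ring homomorphism out of `ℤB₃` determined by two invertible elements satisfying the braid
relation. -/
noncomputable def algebraB3Lift {A : Type*} [Ring A] (u v : Aˣ) (h : u * v * u = v * u * v) :
    MonoidAlgebra ℤ B3 →ₐ[ℤ] A :=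
  MonoidAlgebra.lift ℤ A B3 ((Units.coeHom A).comp
    (PresentedGroup.toGroup (rels := braidRels3) (f := ![u, v]) (by
      intro r hr
      rw [braidRels3, Set.mem_singleton_iff] at hr
      subst hr
      simp only [map_mul, map_inv, FreeGroup.lift_apply_of, Matrix.cons_val_zero,
        Matrix.cons_val_one]
      rw [h, mul_inv_cancel])))

section lift

variable {A : Type*} [Ring A] (u v : Aˣ) (h : u * v * u = v * u * v)

lemma algebraB3Lift_sig1 : algebraB3Lift u v h (MonoidAlgebra.of ℤ B3 B3.sig1) = u := by
  simp [algebraB3Lift]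

lemma algebraB3Lift_sig2 : algebraB3Lift u v h (MonoidAlgebra.of ℤ B3 B3.sig2) = v := by
  simp [algebraB3Lift]

lemma algebraB3Lift_sig1_inv :
    algebraB3Lift u v h (MonoidAlgebra.of ℤ B3 B3.sig1⁻¹) = (u⁻¹ : Aˣ) := by
  simp [algebraB3Lift]

lemma algebraB3Lift_sig2_inv :
    algebraB3Lift u v h (MonoidAlgebra.of ℤ B3 B3.sig2⁻¹) = (v⁻¹ : Aˣ) := by
  simp [algebraB3Lift]

end lift

lemma SB3.induction_gen {p : SB3 → Prop} (one : p 1)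
    (mul : ∀ x b, p b → p (SB3.g x * b)) (b : SB3) : p b := by
  induction b using PresentedMonoid.inductionOn with
  | _ w =>
    induction w using FreeMonoid.inductionOn' with
    | one => simpa using one
    | of_mul x w ih =>
      rw [map_mul]
      exact mul x _ ih

section twisted

variable {K : Type*} [Field K] (t t' c : K) (ht : t * t' = 1) (hc : c ≠ 0)

/-- The Burau matrix of `σ₁` over a field, scaled by `c`. -/
def twistedUnit1 : (Matrix (Fin 2) (Fin 2) K)ˣ where
  val := !![c * -t, c; 0, c]
  inv := !![c⁻¹ * -t', c⁻¹ * t'; 0, c⁻¹]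
  val_inv := by
    ext i j
    fin_cases i <;> fin_cases j <;> simp [Matrix.mul_apply, Fin.sum_univ_two] <;> grind
  inv_val := by
    ext i j
    fin_cases i <;> fin_cases j <;> simp [Matrix.mul_apply, Fin.sum_univ_two] <;> grind

/-- The Burau matrix of `σ₂` over a field, scaled by `c`. -/
def twistedUnit2 : (Matrix (Fin 2) (Fin 2) K)ˣ where
  val := !![c, 0; c * t, c * -t]
  inv := !![c⁻¹, 0; c⁻¹, c⁻¹ * -t']
  val_inv := by
    ext i j
    fin_cases i <;> fin_cases j <;> simp [Matrix.mul_apply, Fin.sum_univ_two] <;> grind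
  inv_val := by
    ext i j
    fin_cases i <;> fin_cases j <;> simp [Matrix.mul_apply, Fin.sum_univ_two] <;> grind

lemma twistedUnit_braid :
    twistedUnit1 t t' c ht hc * twistedUnit2 t t' c ht hc * twistedUnit1 t t' c ht hc =
    twistedUnit2 t t' c ht hc * twistedUnit1 t t' c ht hc * twistedUnit2 t t' c ht hc := by
  ext i j
  fin_cases i <;> fin_cases j <;>
    simp [twistedUnit1, twistedUnit2, Matrix.mul_apply, Fin.sum_univ_two] <;> ring

end twisted

/-- The conjugation defining `β_s(τ₂)` gives `1 + y (β(σ₂) - 1)`. -/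
lemma burau_t2 {R : Type*} [CommRing R] (t t' y : R) (ht : t * t' = 1) :
    !![-t, 1; 0, 1] * !![1, 0; t, -t] * !![1 - y - t * y, y; 0, 1] *
      !![1, 0; 1, -t'] * !![-t', t'; 0, 1] = !![1, 0; t * y, 1 - y - t * y] := by
  ext i j
  fin_cases i <;> fin_cases j <;> simp [Matrix.mul_apply, Fin.sum_univ_two] <;> grind

/-- After the twist by `c`, the Birman image of `b` acts as a nonzero scalar times `β_s(b)`, and
the scalar is the value of the character `σᵢ ↦ c` on that image. -/
lemma twisted_birman {η : SB3 →* MonoidAlgebra ℤ B3} (hη : IsBirman η)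
    {βs : SB3 →* Matrix (Fin 2) (Fin 2) RR} (hβ : IsSingularBurau βs)
    {K : Type*} [Field K] (φ : RR →+* K) (c : K) (hc : c ≠ 0)
    (ht : φ Rt * φ Rtinv = 1) (hc1 : c ^ 2 ≠ 1)
    (hcy : c ^ 2 * (φ Ry - 1) = φ Ry - φ Rtinv) (b : SB3) :
    algebraB3Lift (Units.mk0 c hc) (Units.mk0 c hc) rfl (η b) ≠ 0 ∧
    algebraB3Lift _ _ (twistedUnit_braid (φ Rt) (φ Rtinv) c ht hc) (η b) =
      algebraB3Lift (Units.mk0 c hc) (Units.mk0 c hc) rfl (η b) • φ.mapMatrix (βs b) := by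
  obtain ⟨e1, e2, e3, e4, e5, e6⟩ := hη
  obtain ⟨f1, f2, f3, f4, f5, f6⟩ := hβ
  have hR : Rt * Rtinv = 1 := by
    rw [← Polynomial.C_mul, ← LaurentPolynomial.T_add]
    simp
  rw [burau_t2 _ _ _ hR] at f6
  have hcc : c - c⁻¹ ≠ 0 := by
    intro h
    apply hc1
    field_simp at h
    linear_combination h
  induction b using SB3.induction_gen with
  | one => simp
  | mul x b ih =>
    obtain ⟨ih1, ih2⟩ := ih
    suffices hx : algebraB3Lift (Units.mk0 c hc) (Units.mk0 c hc) rfl (η (SB3.g x)) ≠ 0 ∧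
        algebraB3Lift _ _ (twistedUnit_braid (φ Rt) (φ Rtinv) c ht hc) (η (SB3.g x)) =
          algebraB3Lift (Units.mk0 c hc) (Units.mk0 c hc) rfl (η (SB3.g x)) •
            φ.mapMatrix (βs (SB3.g x)) by
      simp only [map_mul]
      refine ⟨mul_ne_zero hx.1 ih1, ?_⟩
      rw [hx.2, ih2, smul_mul_smul_comm]
    generalize hT : φ Rt = T at *
    generalize hT' : φ Rtinv = T' at *
    generalize hY : φ Ry = Y at *
    cases x <;>
      simp only [e1, e2, e3, e4, e5, e6, f1, f2, f3, f4, f5, f6, map_sub, algebraB3Lift_sig1,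
        algebraB3Lift_sig2, algebraB3Lift_sig1_inv, algebraB3Lift_sig2_inv] <;>
      refine ⟨by simpa using by assumption, ?_⟩ <;>
      ext i j <;> fin_cases i <;> fin_cases j <;>
      simp [twistedUnit1, twistedUnit2, hT, hT', hY, -Polynomial.map_C] <;> grind

/-- if two singular braids have the same image under the Birman
homomorphism, then they have the same singular Burau matrix. -/
theorem birman_eq_implies_burau_eq (η : SB3 →* MonoidAlgebra ℤ B3)
    (hη : IsBirman η) (βs : SB3 →* Matrix (Fin 2) (Fin 2) RR)
    (hβ : IsSingularBurau βs) :
    ∀ b b' : SB3, η b = η b' → βs b = βs b' := by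
  intro b b' h
  let φ : RR →+* AlgebraicClosure (FractionRing RR) :=
    (algebraMap (FractionRing RR) (AlgebraicClosure (FractionRing RR))).comp
      (algebraMap RR (FractionRing RR))
  have hφ : Function.Injective φ :=
    (algebraMap (FractionRing RR) (AlgebraicClosure (FractionRing RR))).injective.comp
      (IsFractionRing.injective RR (FractionRing RR))
  have ht : φ Rt * φ Rtinv = 1 := by
    rw [← map_mul, ← Polynomial.C_mul, ← LaurentPolynomial.T_add]
    simp
  have hy1 : φ Ry - 1 ≠ 0 := by
    rw [← map_one φ, ← map_sub, map_ne_zero_iff φ hφ]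
    exact Polynomial.X_sub_C_ne_zero 1
  have hyt : φ Ry - φ Rtinv ≠ 0 := by
    rw [← map_sub, map_ne_zero_iff φ hφ]
    exact Polynomial.X_sub_C_ne_zero _
  have ht1 : φ Rtinv ≠ 1 := by
    rw [← map_one φ, hφ.ne_iff, ← Polynomial.C_1, Polynomial.C_injective.ne_iff,
      ← LaurentPolynomial.T_zero]
    intro h0
    have := congrArg LaurentPolynomial.degree h0
    rw [LaurentPolynomial.degree_T, LaurentPolynomial.degree_T] at this
    exact absurd this (by decide)
  obtain ⟨c, hc⟩ := IsAlgClosed.exists_pow_nat_eq ((φ Ry - φ Rtinv) / (φ Ry - 1)) two_pos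
  have hc0 : c ≠ 0 := by
    rintro rfl
    exact div_ne_zero hyt hy1 (by rw [← hc]; simp)
  have hcy : c ^ 2 * (φ Ry - 1) = φ Ry - φ Rtinv := by
    rw [hc, div_mul_cancel₀ _ hy1]
  have hc1 : c ^ 2 ≠ 1 := by
    intro h1
    rw [h1] at hcy
    exact ht1 (by linear_combination hcy)
  obtain ⟨h1, h2⟩ := twisted_birman hη hβ φ c hc0 ht hc1 hcy b
  obtain ⟨-, h3⟩ := twisted_birman hη hβ φ c hc0 ht hc1 hcy b'
  rw [← h, h2] at h3
  exact Matrix.map_injective hφ (smul_right_injective _ h1 h3)
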